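/- Let 1≤s≤∞, and let g(t), h(t) be 2π-periodic functions having finite derivatives and satisfying r(t) := √(g²(t)+h²(t)) ≠ 0 for all t and M := sup_{t∈ℝ} √((g'(t))²+(h'(t))²) / √(g²(t)+h²(t)) < ∞. Let φ(t) = g(t)cos(nt+γ) + h(t)sin(nt+γ) with γ∈ℝ, n∈ℕ. Then for all n ≥ 4πsM if 1≤s<∞ (and all n≥1 if s=∞), one has sup_{h'∈ℝ} (1/2)‖φ(·+h') − φ(·)‖_s = ‖r‖_s ( ‖cos t‖_s/(2π)^{1/s} + δ_n M/n ), where |δ_n| < 14π. -/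

import Mathlib

open MeasureTheory Real Filter
open scoped ENNReal

/-- `L_s` norm over a period `[-π,π]` of a `2π`-periodic function. -/
noncomputable def periodNorm (s : ℝ≥0∞) (f : ℝ → ℝ) : ℝ :=
  (eLpNorm f s (volume.restrict (Set.Ioc (-π) π))).toReal

/-!
Put `F = g - ih` and `z(t) = F(t) e^{i(nt+γ)}`, so that `φ = Re z`, `|z| = r` and `|F'| ≤ M |F|`.

By Grönwall, `F` changes by a factor `1 + O(M/n)` over a shift of length at most `π/n`, so
`φ(t + v/n) = Re (z(t) e^{iv}) + O(r(t) M/n)` for `|v| ≤ π`. By translation invariance the left side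
has the same `L_s` norm for every `v`. On the right, `‖v ↦ ‖t ↦ Re (z(t) e^{iv})‖_s‖_s` equals
`‖r‖_s ‖cos‖_s` after the two `L_s` norms are interchanged, because
`Re (w e^{iv}) = |w| cos (v + arg w)`. Hence `‖φ‖_s = ‖r‖_s (‖cos‖_s / (2π)^{1/s} + O(M/n))`.

The triangle inequality gives `½ ‖φ(· + a) - φ‖_s ≤ ‖φ‖_s` for every `a`, and `v = π` shows that
`a = π/n` attains this up to `O(‖r‖_s M/n)`. The error terms are only controlled for `πM ≤ n`, but
when `πM > n` the claim is weaker than the trivial bound of both sides by `‖r‖_s`.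
-/

/-- Lebesgue measure on the period `(-π, π]`, so that `periodNorm s` is the real-valued `L_s`
seminorm with respect to it. -/
noncomputable abbrev periodMeasure : Measure ℝ := volume.restrict (Set.Ioc (-π) π)

lemma memLp_periodMeasure_of_continuous {E : Type*} [NormedAddCommGroup E] {f : ℝ → E}
    (hf : Continuous f) (p : ℝ≥0∞) : MemLp f p periodMeasure := by
  obtain ⟨C, hC⟩ := isCompact_Icc.exists_bound_of_continuousOn (s := Set.Icc (-π) π) hf.continuousOn
  refine MemLp.of_bound hf.aestronglyMeasurable C ?_
  filter_upwards [ae_restrict_mem measurableSet_Ioc] with t ht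
  exact hC t (Set.Ioc_subset_Icc_self ht)

section MixedNorm

variable {α β : Type*} [MeasurableSpace α] [MeasurableSpace β] {μ : Measure α} {ν : Measure β}

lemma eLpNorm_rpow_toReal {ε : Type*} [ENorm ε] {p : ℝ≥0∞} (hp : p ≠ 0) (hp' : p ≠ ∞)
    (f : α → ε) : eLpNorm f p μ ^ p.toReal = ∫⁻ x, ‖f x‖ₑ ^ p.toReal ∂μ := by
  rw [eLpNorm_eq_lintegral_rpow_enorm_toReal hp hp', ← ENNReal.rpow_mul,
    one_div_mul_cancel (ENNReal.toReal_pos hp hp').ne', ENNReal.rpow_one]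

lemma eLpNorm_top_le_iff {ε : Type*} [ENorm ε] {f : α → ε} {C : ℝ≥0∞} :
    eLpNorm f ∞ μ ≤ C ↔ ∀ᵐ x ∂μ, ‖f x‖ₑ ≤ C := by
  rw [eLpNorm_exponent_top]
  exact ⟨fun h => (enorm_ae_le_eLpNormEssSup f μ).mono fun _ hx => hx.trans h,
    eLpNormEssSup_le_of_ae_enorm_bound⟩

lemma eLpNorm_eLpNorm_comm {ε : Type*} [TopologicalSpace ε] [ContinuousENorm ε]
    [SFinite μ] [SFinite ν] {f : α → β → ε} (hf : StronglyMeasurable (Function.uncurry f))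
    (p : ℝ≥0∞) :
    eLpNorm (fun x => eLpNorm (f x) p ν) p μ =
      eLpNorm (fun y => eLpNorm (fun x => f x y) p μ) p ν := by
  rcases eq_or_ne p 0 with rfl | hp
  · simp only [eLpNorm_exponent_zero]
  rcases eq_or_ne p ∞ with rfl | hp'
  · refine eq_of_forall_ge_iff fun C => ?_
    simp only [eLpNorm_top_le_iff, enorm_eq_self]
    exact Measure.ae_ae_comm (measurableSet_le hf.enorm measurable_const)
  · refine ENNReal.rpow_left_injective (ENNReal.toReal_pos hp hp').ne' ?_
    simp only [eLpNorm_rpow_toReal hp hp', enorm_eq_self]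
    exact lintegral_lintegral_swap (hf.enorm.pow_const _).aemeasurable

end MixedNorm

lemma eLpNorm_comp_add_right_of_periodic {E : Type*} [NormedAddCommGroup E] {T : ℝ} (hT : 0 < T)
    {f : ℝ → E} (hf : Continuous f) (hper : Function.Periodic f T) (p : ℝ≥0∞) (a b : ℝ) :
    eLpNorm (fun t => f (t + a)) p (volume.restrict (Set.Ioc b (b + T))) =
      eLpNorm f p (volume.restrict (Set.Ioc b (b + T))) := by
  have : Fact (0 < T) := ⟨hT⟩
  have eLpNorm_coe {G : AddCircle T → E} (hG : Continuous G) :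
      eLpNorm (fun t : ℝ => G t) p (volume.restrict (Set.Ioc b (b + T))) = eLpNorm G p volume :=
    eLpNorm_comp_measurePreserving hG.aestronglyMeasurable (AddCircle.measurePreserving_mk T b)
  have hlift : Continuous hper.lift := continuous_coinduced_dom.2 hf
  calc eLpNorm (fun t : ℝ => hper.lift ((t : AddCircle T) + a)) p
          (volume.restrict (Set.Ioc b (b + T)))
      = eLpNorm (fun y => hper.lift (y + a)) p volume :=
        eLpNorm_coe (G := fun y => hper.lift (y + a)) (by fun_prop)
    _ = eLpNorm hper.lift p volume :=
        eLpNorm_comp_measurePreserving hlift.aestronglyMeasurable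
          (measurePreserving_add_right volume (a : AddCircle T))
    _ = eLpNorm f p (volume.restrict (Set.Ioc b (b + T))) := (eLpNorm_coe hlift).symm

lemma eLpNorm_periodMeasure_comp_add_right {E : Type*} [NormedAddCommGroup E] {f : ℝ → E}
    (hf : Continuous f) (hper : Function.Periodic f (2 * π)) (p : ℝ≥0∞) (a : ℝ) :
    eLpNorm (fun t => f (t + a)) p periodMeasure = eLpNorm f p periodMeasure := by
  have := eLpNorm_comp_add_right_of_periodic two_pi_pos hf hper p a (-π)
  rwa [show -π + 2 * π = π by ring] at this

lemma re_mul_exp_ofReal_mul_I (w : ℂ) (v : ℝ) :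
    (w * Complex.exp (v * Complex.I)).re = ‖w‖ * cos (v + w.arg) := by
  conv_lhs => rw [← Complex.norm_mul_exp_arg_mul_I w]
  rw [mul_assoc, ← Complex.exp_add, ← add_mul, ← Complex.ofReal_add, Complex.re_ofReal_mul,
    Complex.exp_ofReal_mul_I_re, add_comm]

lemma eLpNorm_re_mul_exp_ofReal_mul_I (w : ℂ) (p : ℝ≥0∞) :
    eLpNorm (fun v : ℝ => (w * Complex.exp (v * Complex.I)).re) p periodMeasure =
      ‖w‖ₑ * eLpNorm cos p periodMeasure := by
  simp only [re_mul_exp_ofReal_mul_I]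
  rw [← eLpNorm_periodMeasure_comp_add_right continuous_cos cos_periodic p w.arg, ← enorm_norm w]
  exact eLpNorm_const_smul ‖w‖ (fun v => cos (v + w.arg)) p _

lemma eLpNorm_eLpNorm_re_mul_exp_ofReal_mul_I {α : Type*} [MeasurableSpace α] {μ : Measure α}
    [SFinite μ] {z : α → ℂ} (hz : StronglyMeasurable z) (p : ℝ≥0∞) :
    eLpNorm (fun v : ℝ => eLpNorm (fun t => (z t * Complex.exp (v * Complex.I)).re) p μ)
      p periodMeasure = eLpNorm z p μ * eLpNorm cos p periodMeasure := by
  have hmeas : StronglyMeasurable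
      (Function.uncurry fun (v : ℝ) t => (z t * Complex.exp (v * Complex.I)).re) := by
    have := hz.measurable
    exact Measurable.stronglyMeasurable (by fun_prop)
  set K := eLpNorm cos p periodMeasure with hK
  have hKtop : ENNReal.ofReal K.toReal = K :=
    ENNReal.ofReal_toReal (memLp_periodMeasure_of_continuous continuous_cos p).eLpNorm_ne_top
  have henorm (t : α) : ‖‖z t‖ₑ * K‖ₑ = ‖K.toReal • z t‖ₑ := by
    rw [enorm_eq_self, enorm_smul, Real.enorm_of_nonneg ENNReal.toReal_nonneg, hKtop, mul_comm]
  calc _ = eLpNorm (fun t => ‖z t‖ₑ * K) p μ := by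
        rw [eLpNorm_eLpNorm_comm hmeas]
        simp only [eLpNorm_re_mul_exp_ofReal_mul_I, hK]
    _ = eLpNorm (K.toReal • z) p μ := eLpNorm_congr_enorm_ae (.of_forall henorm)
    _ = eLpNorm z p μ * K := by
        rw [eLpNorm_const_smul, Real.enorm_of_nonneg ENNReal.toReal_nonneg, hKtop, mul_comm]

section Gronwall

variable {E : Type*} [NormedAddCommGroup E] [NormedSpace ℝ E] {F F' : ℝ → E} {M : ℝ}

lemma gronwallBound_zero_mul_self (K C x : ℝ) :
    gronwallBound 0 K (K * C) x = (exp (K * x) - 1) * C := by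
  rcases eq_or_ne K 0 with rfl | hK
  · simp [gronwallBound_K0]
  · rw [gronwallBound_of_K_ne_0 hK]
    field_simp
    ring

lemma norm_add_sub_le_of_norm_deriv_le_of_nonneg (hF : ∀ t, HasDerivAt F (F' t) t) (hM0 : 0 ≤ M)
    (hM : ∀ t, ‖F' t‖ ≤ M * ‖F t‖) (t : ℝ) {u : ℝ} (hu : 0 ≤ u) :
    ‖F (t + u) - F t‖ ≤ (exp (M * u) - 1) * ‖F t‖ := by
  have hderiv (x : ℝ) : HasDerivAt (fun x => F (t + x) - F t) (F' (t + x)) x :=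
    ((hF (t + x)).comp_const_add t x).sub_const (F t)
  have hbound (x : ℝ) : ‖F' (t + x)‖ ≤ M * ‖F (t + x) - F t‖ + M * ‖F t‖ := by
    rw [← mul_add]
    refine (hM (t + x)).trans (mul_le_mul_of_nonneg_left ?_ hM0)
    simpa using norm_add_le (F (t + x) - F t) (F t)
  have := norm_le_gronwallBound_of_norm_deriv_right_le (a := 0) (b := u) (δ := 0)
    (fun x _ => (hderiv x).continuousAt.continuousWithinAt)
    (fun x _ => (hderiv x).hasDerivWithinAt) (by simp) (fun x _ => hbound x) u ⟨hu, le_rfl⟩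
  rwa [gronwallBound_zero_mul_self, sub_zero] at this

lemma norm_add_sub_le_of_norm_deriv_le (hF : ∀ t, HasDerivAt F (F' t) t) (hM0 : 0 ≤ M)
    (hM : ∀ t, ‖F' t‖ ≤ M * ‖F t‖) (t u : ℝ) :
    ‖F (t + u) - F t‖ ≤ (exp (M * |u|) - 1) * ‖F t‖ := by
  rcases le_total 0 u with hu | hu
  · rw [abs_of_nonneg hu]
    exact norm_add_sub_le_of_norm_deriv_le_of_nonneg hF hM0 hM t hu
  · have hreflect (x : ℝ) : HasDerivAt (fun x => F (-x)) (-F' (-x)) x := by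
      simpa [Function.comp_def] using (hF (-x)).scomp x (hasDerivAt_neg x)
    have := norm_add_sub_le_of_norm_deriv_le_of_nonneg hreflect hM0
      (fun x => by simpa using hM (-x)) (-t) (neg_nonneg.2 hu)
    rwa [← neg_add, neg_neg, neg_neg, ← abs_of_nonpos hu] at this

lemma norm_add_sub_le_two_mul_of_norm_deriv_le (hF : ∀ t, HasDerivAt F (F' t) t) (hM0 : 0 ≤ M)
    (hM : ∀ t, ‖F' t‖ ≤ M * ‖F t‖) (t : ℝ) {u d : ℝ} (hu : |u| ≤ d) (hd : M * d ≤ 1) :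
    ‖F (t + u) - F t‖ ≤ 2 * (M * d) * ‖F t‖ := by
  have hd0 : 0 ≤ M * d := mul_nonneg hM0 ((abs_nonneg u).trans hu)
  calc ‖F (t + u) - F t‖ ≤ (exp (M * |u|) - 1) * ‖F t‖ :=
        norm_add_sub_le_of_norm_deriv_le hF hM0 hM t u
    _ ≤ (exp (M * d) - 1) * ‖F t‖ := by gcongr
    _ ≤ 2 * (M * d) * ‖F t‖ := by
        have hexp := abs_exp_sub_one_le (x := M * d) (by rwa [abs_of_nonneg hd0])
        rw [abs_of_nonneg hd0] at hexp
        gcongr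
        exact (le_abs_self _).trans hexp

end Gronwall

section PeriodNorm

variable {s : ℝ≥0∞} {f g b : ℝ → ℝ}

lemma periodNorm_nonneg (s : ℝ≥0∞) (f : ℝ → ℝ) : 0 ≤ periodNorm s f := ENNReal.toReal_nonneg

lemma periodNorm_mono (hb : MemLp b s periodMeasure) (h : ∀ t, |f t| ≤ b t) :
    periodNorm s f ≤ periodNorm s b :=
  ENNReal.toReal_mono hb.eLpNorm_ne_top (eLpNorm_mono_real h)

lemma periodNorm_const_mul (s : ℝ≥0∞) (c : ℝ) (f : ℝ → ℝ) :
    periodNorm s (fun t => c * f t) = |c| * periodNorm s f := by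
  change (eLpNorm (c • f) s periodMeasure).toReal = _
  rw [eLpNorm_const_smul, ENNReal.toReal_mul, toReal_enorm, norm_eq_abs, periodNorm]

lemma periodNorm_sub_le (hs : 1 ≤ s) (hf : MemLp f s periodMeasure)
    (hg : MemLp g s periodMeasure) :
    periodNorm s (fun t => f t - g t) ≤ periodNorm s f + periodNorm s g := by
  rw [periodNorm, periodNorm, periodNorm,
    ← ENNReal.toReal_add hf.eLpNorm_ne_top hg.eLpNorm_ne_top]
  exact ENNReal.toReal_mono (ENNReal.add_ne_top.2 ⟨hf.eLpNorm_ne_top, hg.eLpNorm_ne_top⟩)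
    (eLpNorm_sub_le hf.1 hg.1 hs)

lemma periodNorm_le_add_of_abs_sub_le (hs : 1 ≤ s) (hf : MemLp f s periodMeasure)
    (hg : MemLp g s periodMeasure) (hb : MemLp b s periodMeasure)
    (h : ∀ t, |f t - g t| ≤ b t) : periodNorm s f ≤ periodNorm s g + periodNorm s b := by
  have htriangle := periodNorm_sub_le hs hg (hg.sub hf)
  simp only [Pi.sub_apply, sub_sub_cancel] at htriangle
  refine htriangle.trans (add_le_add_right (periodNorm_mono hb fun t => ?_) _)
  simpa only [Pi.sub_apply, abs_sub_comm] using h t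

lemma abs_periodNorm_sub_periodNorm_le (hs : 1 ≤ s) (hf : MemLp f s periodMeasure)
    (hg : MemLp g s periodMeasure) (hb : MemLp b s periodMeasure)
    (h : ∀ t, |f t - g t| ≤ b t) : |periodNorm s f - periodNorm s g| ≤ periodNorm s b := by
  have hfg := periodNorm_le_add_of_abs_sub_le hs hf hg hb h
  have hgf := periodNorm_le_add_of_abs_sub_le hs hg hf hb fun t => by
    simpa only [abs_sub_comm] using h t
  rw [abs_le]
  constructor <;> linarith

lemma periodNorm_comp_add_right (hf : Continuous f) (hper : Function.Periodic f (2 * π)) (a : ℝ) :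
    periodNorm s (fun t => f (t + a)) = periodNorm s f :=
  congrArg ENNReal.toReal (eLpNorm_periodMeasure_comp_add_right hf hper s a)

lemma eLpNorm_const_periodMeasure {ε : Type*} [TopologicalSpace ε] [ContinuousENorm ε]
    (hs : s ≠ 0) (c : ε) :
    eLpNorm (fun _ => c) s periodMeasure =
      ‖c‖ₑ * ENNReal.ofReal ((2 * π) ^ (1 / s.toReal)) := by
  have huniv : periodMeasure Set.univ = ENNReal.ofReal (2 * π) := by
    rw [Measure.restrict_apply_univ, Real.volume_Ioc]
    ring_nf
  have hne : periodMeasure ≠ 0 := by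
    rw [← Measure.measure_univ_ne_zero, huniv]
    exact (ENNReal.ofReal_pos.2 two_pi_pos).ne'
  rw [eLpNorm_const c hs hne, huniv, ENNReal.ofReal_rpow_of_pos two_pi_pos]

end PeriodNorm

section CosMean

/-- The normalized norm `‖cos‖_s / (2π)^{1/s}`, i.e. the `s`-power mean of `|cos|` over a period.
For `s = ∞` the exponent `1 / s.toReal` is `1 / 0 = 0`, as the limiting case requires. -/
noncomputable def cosMean (s : ℝ≥0∞) : ℝ := periodNorm s cos / (2 * π) ^ (1 / s.toReal)

variable {s : ℝ≥0∞}

lemma cosMean_nonneg (s : ℝ≥0∞) : 0 ≤ cosMean s :=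
  div_nonneg (periodNorm_nonneg s cos) (by positivity)

lemma cosMean_le_one (hs : s ≠ 0) : cosMean s ≤ 1 := by
  have hone : periodNorm s (fun _ => 1) = (2 * π) ^ (1 / s.toReal) := by
    rw [periodNorm, eLpNorm_const_periodMeasure hs, enorm_one, one_mul,
      ENNReal.toReal_ofReal (by positivity)]
  rw [cosMean, div_le_one (by positivity), ← hone]
  exact periodNorm_mono (memLp_periodMeasure_of_continuous continuous_const s) abs_cos_le_one

lemma eLpNorm_eLpNorm_re_mul_exp_eq_cosMean {z : ℝ → ℂ} (hz : Continuous z) (s : ℝ≥0∞) :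
    eLpNorm (fun v : ℝ => eLpNorm (fun t => (z t * Complex.exp (v * Complex.I)).re) s periodMeasure)
      s periodMeasure =
    ENNReal.ofReal (periodNorm s (fun t => ‖z t‖) * cosMean s) *
      ENNReal.ofReal ((2 * π) ^ (1 / s.toReal)) := by
  have hcos : cosMean s * (2 * π) ^ (1 / s.toReal) = periodNorm s cos :=
    div_mul_cancel₀ _ (by positivity)
  rw [eLpNorm_eLpNorm_re_mul_exp_ofReal_mul_I hz.stronglyMeasurable,
    ← ENNReal.ofReal_mul (mul_nonneg (periodNorm_nonneg _ _) (cosMean_nonneg s)), mul_assoc, hcos,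
    ENNReal.ofReal_mul (periodNorm_nonneg _ _), periodNorm, periodNorm, eLpNorm_norm,
    ENNReal.ofReal_toReal (memLp_periodMeasure_of_continuous hz s).eLpNorm_ne_top,
    ENNReal.ofReal_toReal (memLp_periodMeasure_of_continuous continuous_cos s).eLpNorm_ne_top]

lemma abs_sub_le_of_eLpNorm_periodMeasure_eq (hs : s ≠ 0) {N : ℝ → ℝ≥0∞} {P η m : ℝ} (hm : 0 ≤ m)
    (hN : eLpNorm N s periodMeasure =
      ENNReal.ofReal m * ENNReal.ofReal ((2 * π) ^ (1 / s.toReal)))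
    (hNtop : ∀ v ∈ Set.Ioc (-π) π, N v ≠ ∞)
    (h : ∀ v ∈ Set.Ioc (-π) π, |P - (N v).toReal| ≤ η) : |P - m| ≤ η := by
  have hbound (v : ℝ) (hv : v ∈ Set.Ioc (-π) π) : P - η ≤ (N v).toReal ∧ (N v).toReal ≤ P + η := by
    obtain ⟨h₁, h₂⟩ := abs_le.1 (h v hv)
    constructor <;> linarith
  have hsum : 0 ≤ P + η :=
    ENNReal.toReal_nonneg.trans (hbound 0 ⟨neg_lt_zero.2 pi_pos, pi_pos.le⟩).2
  have hscale (x y : ℝ≥0∞) : x * ENNReal.ofReal ((2 * π) ^ (1 / s.toReal)) ≤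
      y * ENNReal.ofReal ((2 * π) ^ (1 / s.toReal)) ↔ x ≤ y :=
    ENNReal.mul_le_mul_iff_left (ENNReal.ofReal_pos.2 (by positivity)).ne' ENNReal.ofReal_ne_top
  have hlower : ENNReal.ofReal (P - η) ≤ ENNReal.ofReal m := by
    rw [← hscale, ← hN, ← enorm_eq_self (ENNReal.ofReal (P - η)), ← eLpNorm_const_periodMeasure hs]
    refine eLpNorm_mono_enorm_ae (ae_restrict_of_forall_mem measurableSet_Ioc fun v hv => ?_)
    exact ENNReal.ofReal_le_of_le_toReal (hbound v hv).1
  have hupper : ENNReal.ofReal m ≤ ENNReal.ofReal (P + η) := by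
    rw [← hscale, ← hN, ← enorm_eq_self (ENNReal.ofReal (P + η)), ← eLpNorm_const_periodMeasure hs]
    refine eLpNorm_mono_enorm_ae (ae_restrict_of_forall_mem measurableSet_Ioc fun v hv => ?_)
    exact (ENNReal.le_ofReal_iff_toReal_le (hNtop v hv) hsum).2 (hbound v hv).2
  rw [abs_sub_comm, abs_le]
  constructor
  · linarith [(ENNReal.ofReal_le_ofReal_iff hm).1 hlower]
  · linarith [(ENNReal.ofReal_le_ofReal_iff hsum).1 hupper]

lemma abs_sub_periodNorm_norm_mul_cosMean_le (hs : s ≠ 0) {z : ℝ → ℂ} (hz : Continuous z)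
    {P η : ℝ}
    (h : ∀ v ∈ Set.Ioc (-π) π,
      |P - periodNorm s (fun t => (z t * Complex.exp (v * Complex.I)).re)| ≤ η) :
    |P - periodNorm s (fun t => ‖z t‖) * cosMean s| ≤ η :=
  abs_sub_le_of_eLpNorm_periodMeasure_eq hs
    (mul_nonneg (periodNorm_nonneg _ _) (cosMean_nonneg s))
    (eLpNorm_eLpNorm_re_mul_exp_eq_cosMean hz s)
    (fun _ _ => (memLp_periodMeasure_of_continuous (by fun_prop) s).eLpNorm_ne_top) h

end CosMean

section HalfModulus

/-- Half the supremum of the `L_s` modulus of continuity of `φ`: `sup_a ½ ‖φ(· + a) - φ‖_s`.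
If these norms are unbounded in `a`, the value is the junk value `0`. -/
noncomputable def halfModulus (s : ℝ≥0∞) (φ : ℝ → ℝ) : ℝ :=
  ⨆ a : ℝ, (1 / 2) * periodNorm s (fun t => φ (t + a) - φ t)

variable {s : ℝ≥0∞} {φ : ℝ → ℝ}

lemma halfModulus_nonneg (s : ℝ≥0∞) (φ : ℝ → ℝ) : 0 ≤ halfModulus s φ :=
  Real.iSup_nonneg fun _ => mul_nonneg (by norm_num) (periodNorm_nonneg _ _)

lemma half_periodNorm_translate_sub_le (hs : 1 ≤ s) (hφ : Continuous φ)
    (hper : Function.Periodic φ (2 * π)) (a : ℝ) :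
    (1 / 2) * periodNorm s (fun t => φ (t + a) - φ t) ≤ periodNorm s φ := by
  have htriangle := periodNorm_sub_le hs
    (memLp_periodMeasure_of_continuous (f := fun t => φ (t + a)) (by fun_prop) s)
    (memLp_periodMeasure_of_continuous hφ s)
  rw [periodNorm_comp_add_right hφ hper] at htriangle
  linarith

lemma halfModulus_le_periodNorm (hs : 1 ≤ s) (hφ : Continuous φ)
    (hper : Function.Periodic φ (2 * π)) : halfModulus s φ ≤ periodNorm s φ :=
  ciSup_le (half_periodNorm_translate_sub_le hs hφ hper)

lemma half_periodNorm_translate_sub_le_halfModulus (hs : 1 ≤ s) (hφ : Continuous φ)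
    (hper : Function.Periodic φ (2 * π)) (a : ℝ) :
    (1 / 2) * periodNorm s (fun t => φ (t + a) - φ t) ≤ halfModulus s φ :=
  le_ciSup ⟨_, Set.forall_mem_range.2 (half_periodNorm_translate_sub_le hs hφ hper)⟩ a

end HalfModulus

section Modulated

/-- The carrier wave `e^{i(ωt+γ)}` with complex amplitude `F`. The function
`g(t) cos(ωt+γ) + h(t) sin(ωt+γ)` is its real part for `F = g - ih`. -/
noncomputable def modulated (F : ℝ → ℂ) (ω γ t : ℝ) : ℂ :=
  F t * Complex.exp ((ω * t + γ : ℝ) * Complex.I)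

variable {F : ℝ → ℂ}

lemma norm_modulated (F : ℝ → ℂ) (ω γ t : ℝ) : ‖modulated F ω γ t‖ = ‖F t‖ := by
  rw [modulated, norm_mul, Complex.norm_exp_ofReal_mul_I, mul_one]

lemma abs_re_modulated_le (F : ℝ → ℂ) (ω γ t : ℝ) : |(modulated F ω γ t).re| ≤ ‖F t‖ :=
  (Complex.abs_re_le_norm _).trans_eq (norm_modulated F ω γ t)

lemma continuous_modulated (hF : Continuous F) (ω γ : ℝ) : Continuous (modulated F ω γ) := by
  unfold modulated
  fun_prop

lemma continuous_re_modulated (hF : Continuous F) (ω γ : ℝ) :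
    Continuous fun t => (modulated F ω γ t).re :=
  Complex.continuous_re.comp (continuous_modulated hF ω γ)

lemma periodic_re_modulated (hF : Function.Periodic F (2 * π)) (n : ℕ) (γ : ℝ) :
    Function.Periodic (fun t => (modulated F n γ t).re) (2 * π) := by
  intro t
  have harg : ((n * (t + 2 * π) + γ : ℝ) : ℂ) * Complex.I =
      (n * t + γ : ℝ) * Complex.I + n * (2 * π * Complex.I) := by
    push_cast
    ring
  simp only [modulated, hF t, harg, Complex.exp_add, Complex.exp_nat_mul_two_pi_mul_I, mul_one]

lemma norm_modulated_add_sub_mul_exp (F : ℝ → ℂ) (ω γ t u : ℝ) :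
    ‖modulated F ω γ (t + u) - modulated F ω γ t * Complex.exp ((ω * u : ℝ) * Complex.I)‖ =
      ‖F (t + u) - F t‖ := by
  have hexp : Complex.exp ((ω * (t + u) + γ : ℝ) * Complex.I) =
      Complex.exp ((ω * t + γ : ℝ) * Complex.I) * Complex.exp ((ω * u : ℝ) * Complex.I) := by
    rw [← Complex.exp_add]
    push_cast
    ring_nf
  rw [modulated, modulated, hexp, ← mul_assoc, ← sub_mul, ← sub_mul, norm_mul, norm_mul,
    Complex.norm_exp_ofReal_mul_I, Complex.norm_exp_ofReal_mul_I, mul_one, mul_one]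

end Modulated

section SlowAmplitude

variable {s : ℝ≥0∞} {F : ℝ → ℂ} {n : ℕ} {ε : ℝ}

lemma abs_re_modulated_add_div_sub_le {ω : ℝ} (hω : 0 < ω)
    (hvar : ∀ t u, |u| ≤ π / ω → ‖F (t + u) - F t‖ ≤ ε * ‖F t‖) (γ t : ℝ) {v : ℝ} (hv : |v| ≤ π) :
    |(modulated F ω γ (t + v / ω)).re - (modulated F ω γ t * Complex.exp (v * Complex.I)).re| ≤
      ε * ‖F t‖ := by
  have hnorm := norm_modulated_add_sub_mul_exp F ω γ t (v / ω)
  rw [mul_div_cancel₀ v hω.ne'] at hnorm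
  rw [← Complex.sub_re]
  refine (Complex.abs_re_le_norm _).trans (hnorm.trans_le (hvar t _ ?_))
  rw [abs_div, abs_of_pos hω]
  gcongr

lemma abs_periodNorm_re_modulated_sub_le (hs : 1 ≤ s) (hF : Continuous F)
    (hper : Function.Periodic F (2 * π)) (hn : n ≠ 0) (hε : 0 ≤ ε)
    (hvar : ∀ t u, |u| ≤ π / n → ‖F (t + u) - F t‖ ≤ ε * ‖F t‖) (γ : ℝ) :
    |periodNorm s (fun t => (modulated F n γ t).re) - periodNorm s (fun t => ‖F t‖) * cosMean s| ≤
      ε * periodNorm s (fun t => ‖F t‖) := by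
  have hφ := continuous_re_modulated hF n γ
  have hz := continuous_modulated hF n γ
  have hnorm : (fun t => ‖F t‖) = fun t => ‖modulated F n γ t‖ := by simp only [norm_modulated]
  have hεR : ε * periodNorm s (fun t => ‖F t‖) = periodNorm s (fun t => ε * ‖F t‖) := by
    rw [periodNorm_const_mul, abs_of_nonneg hε]
  rw [hεR, hnorm]
  refine abs_sub_periodNorm_norm_mul_cosMean_le (one_pos.trans_le hs).ne' hz fun v hv => ?_
  rw [← periodNorm_comp_add_right hφ (periodic_re_modulated hper n γ) (v / n)]
  exact abs_periodNorm_sub_periodNorm_le hs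
    (memLp_periodMeasure_of_continuous (by fun_prop) s)
    (memLp_periodMeasure_of_continuous (by fun_prop) s)
    (memLp_periodMeasure_of_continuous (by fun_prop) s) fun t =>
      abs_re_modulated_add_div_sub_le (Nat.cast_pos.2 hn.bot_lt) hvar γ t
        (abs_le.2 ⟨hv.1.le, hv.2⟩)

lemma periodNorm_re_modulated_sub_le_halfModulus (hs : 1 ≤ s) (hF : Continuous F)
    (hper : Function.Periodic F (2 * π)) (hn : n ≠ 0) (hε : 0 ≤ ε)
    (hvar : ∀ t u, |u| ≤ π / n → ‖F (t + u) - F t‖ ≤ ε * ‖F t‖) (γ : ℝ) :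
    periodNorm s (fun t => (modulated F n γ t).re) - ε / 2 * periodNorm s (fun t => ‖F t‖) ≤
      halfModulus s (fun t => (modulated F n γ t).re) := by
  set φ : ℝ → ℝ := fun t => (modulated F n γ t).re
  have hφ : Continuous φ := continuous_re_modulated hF n γ
  have hnear (t : ℝ) : |-2 * φ t - (φ (t + π / n) - φ t)| ≤ ε * ‖F t‖ := by
    have := abs_re_modulated_add_div_sub_le (Nat.cast_pos.2 hn.bot_lt) hvar γ t
      (abs_of_pos pi_pos).le
    rw [Complex.exp_pi_mul_I, mul_neg_one, Complex.neg_re, abs_sub_comm] at this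
    convert this using 2
    ring
  have hdouble := periodNorm_le_add_of_abs_sub_le hs
    (memLp_periodMeasure_of_continuous (by fun_prop) s)
    (memLp_periodMeasure_of_continuous (by fun_prop) s)
    (memLp_periodMeasure_of_continuous (by fun_prop) s) hnear
  rw [periodNorm_const_mul, periodNorm_const_mul, abs_of_nonneg hε, abs_neg, abs_two] at hdouble
  linarith [half_periodNorm_translate_sub_le_halfModulus hs hφ (periodic_re_modulated hper n γ)
    (π / n)]

lemma abs_halfModulus_re_modulated_sub_le_of_slow (hs : 1 ≤ s) (hF : Continuous F)
    (hper : Function.Periodic F (2 * π)) (hn : n ≠ 0) (hε : 0 ≤ ε)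
    (hvar : ∀ t u, |u| ≤ π / n → ‖F (t + u) - F t‖ ≤ ε * ‖F t‖) (γ : ℝ) :
    |halfModulus s (fun t => (modulated F n γ t).re) -
        periodNorm s (fun t => ‖F t‖) * cosMean s| ≤
      3 / 2 * ε * periodNorm s (fun t => ‖F t‖) := by
  have hle := halfModulus_le_periodNorm hs (continuous_re_modulated hF n γ)
    (periodic_re_modulated hper n γ)
  have hge := periodNorm_re_modulated_sub_le_halfModulus hs hF hper hn hε hvar γ
  obtain ⟨hlower, hupper⟩ :=
    abs_le.1 (abs_periodNorm_re_modulated_sub_le hs hF hper hn hε hvar γ)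
  have := mul_nonneg hε (periodNorm_nonneg s fun t => ‖F t‖)
  rw [abs_le]
  constructor <;> linarith

lemma abs_halfModulus_re_modulated_sub_le_periodNorm (hs : 1 ≤ s) (hF : Continuous F)
    (hper : Function.Periodic F (2 * π)) (n : ℕ) (γ : ℝ) :
    |halfModulus s (fun t => (modulated F n γ t).re) -
        periodNorm s (fun t => ‖F t‖) * cosMean s| ≤ periodNorm s (fun t => ‖F t‖) := by
  have hle := halfModulus_le_periodNorm hs (continuous_re_modulated hF n γ)
    (periodic_re_modulated hper n γ)
  have hmono := periodNorm_mono (memLp_periodMeasure_of_continuous hF.norm s)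
    (abs_re_modulated_le F n γ)
  have hR := periodNorm_nonneg s fun t => ‖F t‖
  refine abs_sub_le_of_nonneg_of_le (halfModulus_nonneg _ _) (hle.trans hmono)
    (mul_nonneg hR (cosMean_nonneg s)) (mul_le_of_le_one_right hR ?_)
  exact cosMean_le_one (one_pos.trans_le hs).ne'

theorem abs_halfModulus_re_modulated_sub_le (hs : 1 ≤ s) {F' : ℝ → ℂ}
    (hF : ∀ t, HasDerivAt F (F' t) t) (hper : Function.Periodic F (2 * π)) {M : ℝ} (hM0 : 0 ≤ M)
    (hM : ∀ t, ‖F' t‖ ≤ M * ‖F t‖) (γ : ℝ) (hn : n ≠ 0) :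
    |halfModulus s (fun t => (modulated F n γ t).re) -
        periodNorm s (fun t => ‖F t‖) * cosMean s| ≤
      3 * π * (periodNorm s (fun t => ‖F t‖) * (M / n)) := by
  have hFc : Continuous F := continuous_iff_continuousAt.2 fun t => (hF t).continuousAt
  have hR := periodNorm_nonneg s fun t => ‖F t‖
  rcases le_total (M * (π / n)) 1 with hslow | hfast
  · refine (abs_halfModulus_re_modulated_sub_le_of_slow hs hFc hper hn
      (ε := 2 * (M * (π / n))) (by positivity) (fun t u hu =>
        norm_add_sub_le_two_mul_of_norm_deriv_le hF hM0 hM t hu hslow) γ).trans_eq ?_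
    ring
  · calc _ ≤ periodNorm s (fun t => ‖F t‖) :=
          abs_halfModulus_re_modulated_sub_le_periodNorm hs hFc hper n γ
      _ ≤ 3 * (M * (π / n)) * periodNorm s (fun t => ‖F t‖) :=
          le_mul_of_one_le_left hR (by linarith)
      _ = 3 * π * (periodNorm s (fun t => ‖F t‖) * (M / n)) := by ring

end SlowAmplitude

lemma norm_ofReal_sub_ofReal_mul_I (x y : ℝ) : ‖(x - y * Complex.I : ℂ)‖ = √(x ^ 2 + y ^ 2) := by
  simpa [sub_eq_add_neg] using Complex.norm_add_mul_I x (-y)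

lemma re_modulated_ofReal_sub_ofReal_mul_I (g h : ℝ → ℝ) (ω γ t : ℝ) :
    (modulated (fun t => g t - h t * Complex.I) ω γ t).re =
      g t * cos (ω * t + γ) + h t * sin (ω * t + γ) := by
  rw [modulated, Complex.mul_re, Complex.exp_ofReal_mul_I_re, Complex.exp_ofReal_mul_I_im]
  simp

lemma exists_abs_le_and_eq_mul {x y C : ℝ} (hC : 0 ≤ C) (hy : 0 ≤ y) (h : |x| ≤ C * y) :
    ∃ δ : ℝ, |δ| ≤ C ∧ x = δ * y := by
  rcases hy.eq_or_lt with rfl | hy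
  · exact ⟨0, by simpa using hC, by simpa using h⟩
  · refine ⟨x / y, ?_, (div_mul_cancel₀ x hy.ne').symm⟩
    rwa [abs_div, abs_of_pos hy, div_le_iff₀ hy]

theorem statement8_general (s : ℝ≥0∞) (hs : 1 ≤ s) (g h : ℝ → ℝ)
    (hgper : ∀ t, g (t + 2 * π) = g t) (hhper : ∀ t, h (t + 2 * π) = h t)
    (hg : Differentiable ℝ g) (hh : Differentiable ℝ h)
    (hr : ∀ t, Real.sqrt (g t ^ 2 + h t ^ 2) ≠ 0)
    (hMb : BddAbove (Set.range fun t =>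
      Real.sqrt (deriv g t ^ 2 + deriv h t ^ 2) / Real.sqrt (g t ^ 2 + h t ^ 2)))
    (M : ℝ)
    (hM : M = ⨆ t : ℝ, Real.sqrt (deriv g t ^ 2 + deriv h t ^ 2) / Real.sqrt (g t ^ 2 + h t ^ 2))
    (γ : ℝ) (n : ℕ) (hn1 : 1 ≤ n) :
    ∃ δ : ℝ, |δ| ≤ 3 * π ∧
      (⨆ a : ℝ, (1 / 2) * periodNorm s
          (fun t => (g (t + a) * Real.cos (n * (t + a) + γ) +
              h (t + a) * Real.sin (n * (t + a) + γ)) -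
            (g t * Real.cos (n * t + γ) + h t * Real.sin (n * t + γ)))) =
        periodNorm s (fun t => Real.sqrt (g t ^ 2 + h t ^ 2)) *
          (periodNorm s Real.cos / (2 * π) ^ (1 / s.toReal) + δ * M / n) := by
  set F : ℝ → ℂ := fun t => g t - h t * Complex.I with hFdef
  have hF (t : ℝ) : HasDerivAt F (deriv g t - deriv h t * Complex.I) t :=
    (hg t).hasDerivAt.ofReal_comp.sub ((hh t).hasDerivAt.ofReal_comp.mul_const _)
  have hM0 : 0 ≤ M := hM ▸ Real.iSup_nonneg fun _ => by positivity
  have hMF (t : ℝ) : ‖(deriv g t - deriv h t * Complex.I : ℂ)‖ ≤ M * ‖F t‖ := by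
    rw [norm_ofReal_sub_ofReal_mul_I, norm_ofReal_sub_ofReal_mul_I,
      ← div_le_iff₀ ((sqrt_nonneg _).lt_of_ne' (hr t)), hM]
    exact le_ciSup hMb t
  have hper : Function.Periodic F (2 * π) := fun t => by simp only [hFdef, hgper, hhper]
  obtain ⟨δ, hδ, heq⟩ := exists_abs_le_and_eq_mul (by positivity)
    (mul_nonneg (periodNorm_nonneg _ _) (by positivity))
    (abs_halfModulus_re_modulated_sub_le hs hF hper hM0 hMF γ (Nat.one_le_iff_ne_zero.1 hn1))
  refine ⟨δ, hδ, ?_⟩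
  simp only [← re_modulated_ofReal_sub_ofReal_mul_I, ← norm_ofReal_sub_ofReal_mul_I]
  change halfModulus s (fun t => (modulated F n γ t).re) =
    periodNorm s (fun t => ‖F t‖) * (cosMean s + δ * M / n)
  linear_combination heq

theorem statement8 (s : ℝ≥0∞) (hs : 1 ≤ s) (g h : ℝ → ℝ)
    (hgper : ∀ t, g (t + 2 * π) = g t) (hhper : ∀ t, h (t + 2 * π) = h t)
    (hg : Differentiable ℝ g) (hh : Differentiable ℝ h)
    (hr : ∀ t, Real.sqrt (g t ^ 2 + h t ^ 2) ≠ 0)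
    (hMb : BddAbove (Set.range fun t =>
      Real.sqrt (deriv g t ^ 2 + deriv h t ^ 2) / Real.sqrt (g t ^ 2 + h t ^ 2)))
    (M : ℝ)
    (hM : M = ⨆ t : ℝ, Real.sqrt (deriv g t ^ 2 + deriv h t ^ 2) / Real.sqrt (g t ^ 2 + h t ^ 2))
    (γ : ℝ) (n : ℕ) (hn1 : 1 ≤ n)
    (hn : s ≠ ∞ → 4 * π * s.toReal * M ≤ (n : ℝ)) :
    ∃ δ : ℝ, |δ| < 14 * π ∧
      (⨆ a : ℝ, (1 / 2) * periodNorm s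
          (fun t => (g (t + a) * Real.cos (n * (t + a) + γ) + h (t + a) * Real.sin (n * (t + a) + γ)) -
            (g t * Real.cos (n * t + γ) + h t * Real.sin (n * t + γ)))) =
        periodNorm s (fun t => Real.sqrt (g t ^ 2 + h t ^ 2)) *
          (periodNorm s Real.cos / (2 * π) ^ (1 / s.toReal) + δ * M / n) := by
  obtain ⟨δ, hδ, heq⟩ := statement8_general s hs g h hgper hhper hg hh hr hMb M hM γ n hn1
  exact ⟨δ, hδ.trans_lt (by linarith [pi_pos]), heq⟩
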